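/- Let E ⊆ ℝ⁺ be a set which is not strongly porous at 0. Then there exists q > 1 such that E(q) ∩ (0,1) = (0,1). -/

import Mathlib

/-!
Since `0 ≤ λ(E,h) ≤ h`, the upper porosity is at most `1`, so here it is smaller than some `c < 1`.
Hence, for every sufficiently small `h`, the interval `((1 - c) h, h)`, of length `c h`, is too long
to be a gap of `E`, and `E` has a point `x` in it. The `q`-neighbourhood of `x` contains `h` as soon
as `q (1 - c) ≥ 1`. The points `y < 1` that are not small are covered by the neighbourhood of one
fixed point of `E`, at the price of a larger `q`.
-/

open Filter Set

/-- `gapLength E h` = λ(E,h): the length of the largest open subinterval of (0,h)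
containing no point of `E` (0 if no such interval exists). -/
noncomputable def gapLength (E : Set ℝ) (h : ℝ) : ℝ :=
  sSup {l : ℝ | ∃ a b : ℝ, 0 ≤ a ∧ a ≤ b ∧ b ≤ h ∧ Set.Ioo a b ∩ E = ∅ ∧ l = b - a}

/-- The right upper porosity of `E` at 0. -/
noncomputable def upperPorosity (E : Set ℝ) : ℝ :=
  Filter.limsup (fun h => gapLength E h / h) (nhdsWithin (0:ℝ) (Set.Ioi 0))

/-- The right lower porosity of `E` at 0. -/
noncomputable def lowerPorosity (E : Set ℝ) : ℝ :=
  Filter.liminf (fun h => gapLength E h / h) (nhdsWithin (0:ℝ) (Set.Ioi 0))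

/-- `UMP E`: sequences of positive reals tending to 0 along which the upper limit
in the definition of porosity is attained. -/
def UMP (E : Set ℝ) : Set (ℕ → ℝ) :=
  {h | (∀ n, 0 < h n) ∧ Filter.Tendsto h Filter.atTop (nhds 0) ∧
    Filter.Tendsto (fun n => gapLength E (h n) / h n) Filter.atTop (nhds (upperPorosity E))}

/-- The set of all strongly porous at 0 subsets of ℝ⁺. -/
def SP : Set (Set ℝ) := {E | E ⊆ Set.Ici 0 ∧ upperPorosity E = 1}

/-- `I` is an ideal on the set `X`. -/
def IsIdealOn (X : Set ℝ) (I : Set (Set ℝ)) : Prop :=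
  I.Nonempty ∧ (∀ B ∈ I, B ⊆ X) ∧ (∀ B ∈ I, ∀ C : Set ℝ, C ⊆ B → C ∈ I) ∧
    (∀ B ∈ I, ∀ C ∈ I, B ∪ C ∈ I) ∧ X ∉ I

/-- `I` is a `Γ`-maximal ideal on `X`. -/
def IsMaximalIdealIn (X : Set ℝ) (Γ I : Set (Set ℝ)) : Prop :=
  IsIdealOn X I ∧ I ⊆ Γ ∧ ∀ J : Set (Set ℝ), IsIdealOn X J → I ⊆ J → J ⊆ Γ → I = J

/-- `Î(SP)`: the intersection of all SP-maximal ideals on ℝ⁺. -/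
def hatISP : Set (Set ℝ) :=
  {A | ∀ I : Set (Set ℝ), IsMaximalIdealIn (Set.Ici 0) SP I → A ∈ I}

/-- The q-blow up `E(q)` of a set `E ⊆ ℝ⁺`. -/
def blowUp (E : Set ℝ) (q : ℝ) : Set ℝ := ⋃ x ∈ E, Set.Ioo (q⁻¹ * x) (q * x)


lemma bddAbove_gaps (E : Set ℝ) (h : ℝ) :
    BddAbove {l : ℝ | ∃ a b : ℝ, 0 ≤ a ∧ a ≤ b ∧ b ≤ h ∧ Set.Ioo a b ∩ E = ∅ ∧ l = b - a} := by
  refine ⟨h, ?_⟩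
  rintro l ⟨a, b, ha, hab, hb, -, rfl⟩
  linarith

lemma gapLength_nonneg (E : Set ℝ) (h : ℝ) : 0 ≤ gapLength E h := by
  apply Real.sSup_nonneg
  rintro l ⟨a, b, ha, hab, hb, -, rfl⟩
  linarith

lemma gapLength_le (E : Set ℝ) {h : ℝ} (hh : 0 < h) : gapLength E h ≤ h := by
  apply Real.sSup_le _ hh.le
  rintro l ⟨a, b, ha, hab, hb, -, rfl⟩
  linarith

/-- An interval longer than the largest gap meets `E`. -/
lemma exists_mem_of_gapLength_lt {E : Set ℝ} {a h : ℝ} (ha : 0 ≤ a) (hah : a ≤ h)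
    (hgap : gapLength E h < h - a) : ∃ x ∈ E, a < x ∧ x < h := by
  by_contra! hcon
  refine hgap.not_ge (le_csSup (bddAbove_gaps E h) ⟨a, h, ha, hah, le_rfl, ?_, rfl⟩)
  ext x
  simp only [mem_inter_iff, mem_Ioo, mem_empty_iff_false, iff_false, not_and]
  rintro ⟨h1, h2⟩ hx
  exact (hcon x hx h1).not_gt h2

lemma eventually_gapLength_div_le_one (E : Set ℝ) :
    ∀ᶠ h in nhdsWithin (0:ℝ) (Ioi 0), gapLength E h / h ≤ 1 := by
  filter_upwards [self_mem_nhdsWithin] with h hh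
  exact div_le_one_of_le₀ (gapLength_le E hh) (le_of_lt hh)

lemma eventually_zero_le_gapLength_div (E : Set ℝ) :
    ∀ᶠ h in nhdsWithin (0:ℝ) (Ioi 0), 0 ≤ gapLength E h / h := by
  filter_upwards [self_mem_nhdsWithin] with h hh
  exact div_nonneg (gapLength_nonneg E h) (le_of_lt hh)

/-- The function `h ↦ λ(E,h)/h` is bounded near `0`, so its real `limsup` is not a junk value. -/
lemma upperPorosity_le_one (E : Set ℝ) : upperPorosity E ≤ 1 :=
  limsup_le_of_le (isCoboundedUnder_le_of_eventually_le _ (eventually_zero_le_gapLength_div E))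
    (eventually_gapLength_div_le_one E)

/-- If `E` is not strongly porous, then near `0` it has a point in every interval `(r h, h)`,
for some fixed ratio `r > 0`. -/
lemma exists_ratio {E : Set ℝ} (h : upperPorosity E ≠ 1) :
    ∃ r > 0, ∃ δ > 0, ∀ y : ℝ, 0 < y → y < δ → ∃ x ∈ E, r * y < x ∧ x < y := by
  obtain ⟨c, hc, hc1⟩ := exists_between (lt_of_le_of_ne (upperPorosity_le_one E) h)
  have hev := eventually_lt_of_limsup_lt hc
    (isBoundedUnder_of_eventually_le (eventually_gapLength_div_le_one E))
  obtain ⟨δ, hδ, hsub⟩ := mem_nhdsGT_iff_exists_Ioo_subset.mp hev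
  refine ⟨1 - c, by linarith, δ, hδ, fun y hy hyδ => ?_⟩
  have hlt : gapLength E y / y < c := hsub ⟨hy, hyδ⟩
  have hc0 : 0 < c := (div_nonneg (gapLength_nonneg E y) hy.le).trans_lt hlt
  rw [div_lt_iff₀ hy] at hlt
  apply exists_mem_of_gapLength_lt
  · exact mul_nonneg (by linarith) hy.le
  · nlinarith
  · linarith

theorem stmt12 (E : Set ℝ) (hE : E ⊆ Set.Ici 0) (h : upperPorosity E ≠ 1) :
    ∃ q : ℝ, 1 < q ∧ blowUp E q ∩ Set.Ioo 0 1 = Set.Ioo 0 1 := by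
  obtain ⟨r, hr, δ, hδ, hpt⟩ := exists_ratio h
  -- This `q` satisfies both `q r ≥ 1`, for small points, and `q r (δ / 2) ≥ 1`, for the others.
  have hq : 1 < 1 + (1 + 2 / δ) / r := by
    have : 0 < (1 + 2 / δ) / r := by positivity
    linarith
  have hqr : 1 + 2 / δ ≤ (1 + (1 + 2 / δ) / r) * r := by
    have : (1 + (1 + 2 / δ) / r) * r = r + (1 + 2 / δ) := by field_simp
    linarith
  generalize 1 + (1 + 2 / δ) / r = q at hq hqr
  refine ⟨q, hq, inter_eq_right.mpr ?_⟩
  rintro y ⟨hy0, hy1⟩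
  have hh0 : 0 < min y (δ / 2) := lt_min hy0 (by linarith)
  obtain ⟨x, hxE, hx1, hx2⟩ :=
    hpt (min y (δ / 2)) hh0 ((min_le_right _ _).trans_lt (by linarith))
  have hx0 : 0 < x := (mul_pos hr hh0).trans hx1
  refine mem_iUnion₂.mpr ⟨x, hxE, ?_, ?_⟩
  · calc q⁻¹ * x ≤ 1 * x := by
          gcongr
          exact inv_le_one_of_one_le₀ hq.le
      _ = x := one_mul x
      _ < y := hx2.trans_le (min_le_left _ _)
  · have hy : y ≤ (1 + 2 / δ) * min y (δ / 2) := by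
      have h2 : 0 < 2 / δ := by positivity
      rcases min_choice y (δ / 2) with hm | hm <;> rw [hm]
      · nlinarith
      · have : 2 / δ * (δ / 2) = 1 := by field_simp
        nlinarith
    calc y ≤ (1 + 2 / δ) * min y (δ / 2) := hy
      _ ≤ q * r * min y (δ / 2) := by gcongr
      _ = q * (r * min y (δ / 2)) := by ring
      _ < q * x := by gcongr
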